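/- Let Ω_o be the two-dimensional overlap region under the graph of ζ. Then for every function φ that is C¹ on a neighborhood of the closure of Ω_o, the divergence-theorem identity ∫_{Ω_o} φ(x,y)² d(x,y) + ∫_{Ω_o} 2 y φ(x,y) ∂_yφ(x,y) d(x,y) = ∫_0^{x_M} ζ(x) φ(x,ζ(x))² dx holds (this is the identity obtained by applying the divergence theorem to the vector field v = (0, y φ²) on Ω_o; the flux through the bottom and lateral faces vanishes). -/

import Mathlib

open MeasureTheory Set

/-- Partial derivative of `φ : ℝ × ℝ → ℝ` with respect to the second variable. -/
noncomputable def pdy (φ : ℝ × ℝ → ℝ) (p : ℝ × ℝ) : ℝ :=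
  deriv (fun t => φ (p.1, t)) p.2

/-- The two-dimensional overlap region under the graph of `ζ`. -/
def ovl (xM : ℝ) (ζ : ℝ → ℝ) : Set (ℝ × ℝ) :=
  {p : ℝ × ℝ | 0 < p.1 ∧ p.1 < xM ∧ 0 < p.2 ∧ p.2 < ζ p.1}

/-!
On each vertical segment `{x} × [0, ζ x]` the integrand `φ² + 2 y φ ∂_yφ` is the `y`-derivative of
`y φ²`, so by the fundamental theorem of calculus it integrates to `ζ x * φ (x, ζ x) ^ 2`.
Fubini's theorem sums the segments. Only the vertical direction is differentiated, so the base may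
be any measure space; regularity up to the compact closure serves to make the integrals converge.
-/

section RegionBetween

variable {α E : Type*} {f g : α → ℝ} {s : Set α}

lemma indicator_regionBetween_apply [Zero E] {x : α} (hx : x ∈ s) (F : α × ℝ → E) (y : ℝ) :
    (regionBetween f g s).indicator F (x, y) =
      (Ioo (f x) (g x)).indicator (fun t => F (x, t)) y := by
  simp only [indicator, regionBetween, mem_ofPred_eq, hx, true_and]

lemma mk_mem_closure_regionBetween [TopologicalSpace α] {x : α} {y : ℝ} (hx : x ∈ s)
    (hfg : f x < g x) (hy : y ∈ Icc (f x) (g x)) : (x, y) ∈ closure (regionBetween f g s) := by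
  have hmaps : MapsTo (fun t : ℝ => (x, t)) (Ioo (f x) (g x)) (regionBetween f g s) :=
    fun t ht => ⟨hx, ht⟩
  exact hmaps.closure (by fun_prop) (by rwa [closure_Ioo hfg.ne])

lemma isBounded_regionBetween [PseudoMetricSpace α] {a b : ℝ} (hs : Bornology.IsBounded s)
    (hf : ∀ x ∈ s, a ≤ f x) (hg : ∀ x ∈ s, g x ≤ b) :
    Bornology.IsBounded (regionBetween f g s) :=
  (hs.prod (Metric.isBounded_Icc a b)).subset fun p hp =>
    ⟨hp.1, (hf p.1 hp.1).trans hp.2.1.le, hp.2.2.le.trans (hg p.1 hp.1)⟩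

variable [MeasurableSpace α] {μ : Measure α} [SFinite μ] [NormedAddCommGroup E]

lemma restrict_prod_regionBetween :
    ((μ.restrict s).prod volume).restrict (regionBetween f g s) =
      (μ.prod volume).restrict (regionBetween f g s) := by
  rw [Measure.restrict_prod_eq_prod_univ,
    Measure.restrict_restrict_of_subset (regionBetween_subset f g s)]

lemma integrable_indicator_regionBetween (hs : MeasurableSet s)
    (hf : AEMeasurable f (μ.restrict s)) (hg : AEMeasurable g (μ.restrict s)) {F : α × ℝ → E}
    (hF : IntegrableOn F (regionBetween f g s) (μ.prod volume)) :
    Integrable ((regionBetween f g s).indicator F) ((μ.restrict s).prod volume) := by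
  refine IntegrableOn.integrable_indicator₀ ?_
    (nullMeasurableSet_regionBetween _ hf hg hs.nullMeasurableSet)
  rwa [IntegrableOn, restrict_prod_regionBetween]

lemma ae_integrableOn_section_regionBetween (hs : MeasurableSet s)
    (hf : AEMeasurable f (μ.restrict s)) (hg : AEMeasurable g (μ.restrict s)) {F : α × ℝ → E}
    (hF : IntegrableOn F (regionBetween f g s) (μ.prod volume)) :
    ∀ᵐ x ∂μ.restrict s, IntegrableOn (fun y => F (x, y)) (Ioo (f x) (g x)) := by
  filter_upwards [(integrable_indicator_regionBetween hs hf hg hF).prod_right_ae,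
    ae_restrict_mem hs] with x hint hx
  rw [← integrable_indicator_iff measurableSet_Ioo]
  simpa only [indicator_regionBetween_apply hx] using hint

variable [NormedSpace ℝ E]

lemma setIntegral_regionBetween (hs : MeasurableSet s)
    (hf : AEMeasurable f (μ.restrict s)) (hg : AEMeasurable g (μ.restrict s)) {F : α × ℝ → E}
    (hF : IntegrableOn F (regionBetween f g s) (μ.prod volume)) :
    ∫ p in regionBetween f g s, F p ∂μ.prod volume =
      ∫ x in s, (∫ y in Ioo (f x) (g x), F (x, y)) ∂μ := by
  have hR : NullMeasurableSet (regionBetween f g s) ((μ.restrict s).prod volume) :=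
    nullMeasurableSet_regionBetween _ hf hg hs.nullMeasurableSet
  rw [← restrict_prod_regionBetween, ← integral_indicator₀ hR,
    integral_prod _ (integrable_indicator_regionBetween hs hf hg hF)]
  refine setIntegral_congr_fun hs fun x hx => ?_
  simp only [indicator_regionBetween_apply hx, integral_indicator measurableSet_Ioo]

variable [CompleteSpace E]

theorem setIntegral_regionBetween_eq_sub_of_hasDerivAt (hs : MeasurableSet s)
    (hf : AEMeasurable f (μ.restrict s)) (hg : AEMeasurable g (μ.restrict s))
    (hfg : ∀ x ∈ s, f x ≤ g x) {F F' : α × ℝ → E}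
    (hcont : ∀ x ∈ s, ContinuousOn (fun y => F (x, y)) (Icc (f x) (g x)))
    (hderiv : ∀ p ∈ regionBetween f g s, HasDerivAt (fun y => F (p.1, y)) (F' p) p.2)
    (hint : IntegrableOn F' (regionBetween f g s) (μ.prod volume)) :
    ∫ p in regionBetween f g s, F' p ∂μ.prod volume =
      ∫ x in s, (F (x, g x) - F (x, f x)) ∂μ := by
  rw [setIntegral_regionBetween hs hf hg hint]
  refine integral_congr_ae ?_
  filter_upwards [ae_integrableOn_section_regionBetween hs hf hg hint, ae_restrict_mem hs]
    with x hxint hx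
  rw [← integral_Ioc_eq_integral_Ioo, ← intervalIntegral.integral_of_le (hfg x hx)]
  exact intervalIntegral.integral_eq_sub_of_hasDerivAt_of_le (hfg x hx) (hcont x hx)
    (fun y hy => hderiv (x, y) ⟨hx, hy⟩)
    ((intervalIntegrable_iff_integrableOn_Ioo_of_le (hfg x hx)).2 hxint)

end RegionBetween

theorem setIntegral_sq_add_setIntegral_two_mul_regionBetween {α : Type*} [MeasurableSpace α]
    {μ : Measure α} [SFinite μ] {s : Set α} (hs : MeasurableSet s) {ζ : α → ℝ}
    (hζm : AEMeasurable ζ (μ.restrict s)) (hζ : ∀ x ∈ s, 0 ≤ ζ x) {φ φ' : α × ℝ → ℝ}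
    (hcont : ∀ x ∈ s, ContinuousOn (fun y => φ (x, y)) (Icc 0 (ζ x)))
    (hderiv : ∀ p ∈ regionBetween 0 ζ s, HasDerivAt (fun y => φ (p.1, y)) (φ' p) p.2)
    (hint : IntegrableOn (fun p => φ p ^ 2) (regionBetween 0 ζ s) (μ.prod volume))
    (hint' : IntegrableOn (fun p => 2 * p.2 * φ p * φ' p) (regionBetween 0 ζ s)
      (μ.prod volume)) :
    (∫ p in regionBetween 0 ζ s, φ p ^ 2 ∂μ.prod volume) +
      (∫ p in regionBetween 0 ζ s, 2 * p.2 * φ p * φ' p ∂μ.prod volume) =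
    ∫ x in s, ζ x * φ (x, ζ x) ^ 2 ∂μ := by
  have hflux : ∀ p ∈ regionBetween 0 ζ s,
      HasDerivAt (fun y => y * φ (p.1, y) ^ 2) (φ p ^ 2 + 2 * p.2 * φ p * φ' p) p.2 := by
    intro p hp
    refine ((hasDerivAt_id' p.2).mul ((hderiv p hp).pow 2)).congr_deriv ?_
    simp only [Pi.pow_apply, Prod.mk.eta]
    ring
  rw [← integral_add hint hint', setIntegral_regionBetween_eq_sub_of_hasDerivAt hs
    measurable_zero.aemeasurable hζm hζ (F := fun p => p.2 * φ p ^ 2)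
    (fun x hx => continuousOn_id.mul ((hcont x hx).pow 2)) hflux (hint.add hint')]
  simp only [Pi.zero_apply, zero_mul, sub_zero]

lemma hasDerivAt_comp_prodMk_right {E F : Type*} [NormedAddCommGroup E] [NormedSpace ℝ E]
    [NormedAddCommGroup F] [NormedSpace ℝ F] {φ : E × ℝ → F} {p : E × ℝ}
    (hφ : DifferentiableAt ℝ φ p) :
    HasDerivAt (fun t => φ (p.1, t)) (fderiv ℝ φ p (0, 1)) p.2 :=
  HasFDerivAt.comp_hasDerivAt p.2 (hφ.hasFDerivAt : HasFDerivAt φ _ (p.1, p.2))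
    ((hasDerivAt_const p.2 p.1).prodMk (hasDerivAt_id p.2))

lemma continuousOn_deriv_comp_prodMk_right {E F : Type*} [NormedAddCommGroup E] [NormedSpace ℝ E]
    [NormedAddCommGroup F] [NormedSpace ℝ F] {φ : E × ℝ → F} {U : Set (E × ℝ)} (hU : IsOpen U)
    (hφ : ContDiffOn ℝ 1 φ U) : ContinuousOn (fun p => deriv (fun t => φ (p.1, t)) p.2) U :=
  ((hφ.continuousOn_fderiv_of_isOpen hU le_rfl).clm_apply continuousOn_const).congr fun _ hp =>
    (hasDerivAt_comp_prodMk_right <|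
      (hφ.differentiableOn one_ne_zero).differentiableAt (hU.mem_nhds hp)).deriv

theorem divergence_identity_overlap_general {E : Type*} [NormedAddCommGroup E] [NormedSpace ℝ E]
    [FiniteDimensional ℝ E] [MeasurableSpace E] [BorelSpace E] {μ : Measure E}
    [IsFiniteMeasureOnCompacts μ] {s : Set E} (hs : MeasurableSet s)
    (hsb : Bornology.IsBounded s) {ζ : E → ℝ} {d : ℝ} (hζm : AEMeasurable ζ (μ.restrict s))
    (hζ : ∀ x ∈ s, 0 ≤ ζ x ∧ ζ x ≤ d) {U : Set (E × ℝ)} (hU : IsOpen U)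
    (hclU : closure (regionBetween 0 ζ s) ⊆ U) {φ : E × ℝ → ℝ} (hφ : ContDiffOn ℝ 1 φ U) :
    (∫ p in regionBetween 0 ζ s, φ p ^ 2 ∂μ.prod volume) +
      (∫ p in regionBetween 0 ζ s,
        2 * p.2 * φ p * deriv (fun t => φ (p.1, t)) p.2 ∂μ.prod volume) =
    ∫ x in s, ζ x * φ (x, ζ x) ^ 2 ∂μ := by
  have hK : IsCompact (closure (regionBetween 0 ζ s)) :=
    (isBounded_regionBetween hsb (fun _ _ => le_rfl) fun x hx => (hζ x hx).2).isCompact_closure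
  have hint {h : E × ℝ → ℝ} (hh : ContinuousOn h U) :
      IntegrableOn h (regionBetween 0 ζ s) (μ.prod volume) :=
    ((hh.mono hclU).integrableOn_compact hK).mono_set subset_closure
  have hcont (x : E) (hx : x ∈ s) : ContinuousOn (fun y => φ (x, y)) (Icc 0 (ζ x)) := by
    rcases (hζ x hx).1.eq_or_lt with hzero | hpos
    · simp only [← hzero, Icc_self, continuousOn_singleton]
    · exact hφ.continuousOn.comp (by fun_prop) fun y hy =>
        hclU (mk_mem_closure_regionBetween hx hpos hy)
  have hderiv (p : E × ℝ) (hp : p ∈ regionBetween 0 ζ s) :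
      HasDerivAt (fun y => φ (p.1, y)) (deriv (fun t => φ (p.1, t)) p.2) p.2 :=
    (hasDerivAt_comp_prodMk_right <| (hφ.differentiableOn one_ne_zero).differentiableAt
      (hU.mem_nhds (hclU (subset_closure hp)))).differentiableAt.hasDerivAt
  have hlin : ContinuousOn (fun p : E × ℝ => 2 * p.2) U := by fun_prop
  exact setIntegral_sq_add_setIntegral_two_mul_regionBetween hs hζm (fun x hx => (hζ x hx).1)
    hcont hderiv (hint (hφ.continuousOn.pow 2))
    (hint ((hlin.mul hφ.continuousOn).mul (continuousOn_deriv_comp_prodMk_right hU hφ)))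

lemma ovl_eq_regionBetween (xM : ℝ) (ζ : ℝ → ℝ) :
    ovl xM ζ = regionBetween 0 ζ (Ioo 0 xM) := by
  ext p
  simp only [ovl, regionBetween, mem_ofPred_eq, mem_Ioo, Pi.zero_apply, and_assoc]

/-- The divergence-theorem identity obtained by applying the
divergence theorem to the vector field `v = (0, y φ²)` on the overlap region `Ω_o`:
`∫_{Ω_o} φ² + ∫_{Ω_o} 2 y φ ∂_yφ = ∫_0^{x_M} ζ(x) φ(x,ζ(x))² dx`. -/
theorem divergence_identity_overlap
    (xM dO : ℝ) (hxM : 0 < xM) (hdO : 0 < dO)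
    (ζ : ℝ → ℝ) (hζc : ContinuousOn ζ (Icc 0 xM))
    (hζ : ∀ x ∈ Icc 0 xM, 0 < ζ x ∧ ζ x ≤ dO)
    (U : Set (ℝ × ℝ)) (hU : IsOpen U) (hclU : closure (ovl xM ζ) ⊆ U)
    (φ : ℝ × ℝ → ℝ) (hφ : ContDiffOn ℝ 1 φ U) :
    (∫ p in ovl xM ζ, (φ p) ^ 2) +
      (∫ p in ovl xM ζ, 2 * p.2 * φ p * pdy φ p) =
    ∫ x in Ioo (0 : ℝ) xM, ζ x * (φ (x, ζ x)) ^ 2 := by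
  rw [ovl_eq_regionBetween] at hclU ⊢
  exact divergence_identity_overlap_general measurableSet_Ioo (Metric.isBounded_Ioo 0 xM)
    ((hζc.mono Ioo_subset_Icc_self).aemeasurable measurableSet_Ioo)
    (fun x hx => (hζ x (Ioo_subset_Icc_self hx)).imp_left le_of_lt) hU hclU hφ
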